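/- Let X be a real Banach space having property (E) and let Y ⊆ X* be a norming norm-closed linear subspace. Let M : Σ → b(X) be a set-valued map defined on a σ-algebra Σ such that: (i) M(A) is relatively σ(X,Y)-compact for every A ∈ Σ; (ii) the support map s(x*,M) is countably additive for every x* ∈ Y; and (iii) s(x*,M) is finitely additive for every x* ∈ X*. Then M is a multimeasure, i.e., s(x*,M) is countably additive for every x* ∈ X*. -/

import Mathlib

/-!
By restricting to unions of subfamilies of a disjoint sequence it suffices to treat a set-valued
map `N` on the subsets of `ℕ`. The uniform boundedness principle on the Banach space `Y` shows that
all values of `N` lie in one ball (`exists_uniform_bound`), so for every functional `f` the bounded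
finitely additive function `s(f, N)` has summable point masses, and `s(f, N [k, ∞))` converges to
some `L f`. Countable additivity of `s(f, N)` on the points of `ℕ` means `L f = 0`. Since
`L f + L (-f) ≥ 0`, it is enough to prove `L f ≤ 0` for all `f` (`limit_nonpos`).

Suppose `L f > 0`. As `Y` is norming, property (E) gives a bounded sequence `g n` in `Y` with
`g n → f` weak* (`exists_seq_of_norming`). On late blocks `[k, l)` the number `s(f, N [k, l))` is
small. For fixed `k` and suitable `n`, however, `s(g n, N [k, ∞))` is large, since `f` is large
somewhere on `N [k, ∞)`; and `g n` being countably additive, `s(g n, N [k, l))` is still large for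
large `l`. Hence some `d ∈ N [k, l)` has `g n d` large and `f d` small, and a later `g n'` is small
at `d`. Iterating produces disjoint blocks `J t`, points `D t ∈ N (J t)` and weak*-null functionals
`H t = g n - g n'` in `Y` that are bounded below by some `ε > 0` at all late partial sums of
`∑ D t`. This survives convex combinations `h` of the `H t` and gives `s(h, N (⋃ J t)) ≥ ε`.
But the `H t` are `σ(X, Y)`-continuous, uniformly bounded and pointwise null on the compact closure
of `N (⋃ J t)`, so by the Riesz representation theorem, dominated convergence and Hahn-Banach some
convex combination is smaller than `ε / 2` there (`exists_convexHull_lt`).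
-/

/-- The topology `σ(X, Y)` of pointwise convergence on a set `Y ⊆ X*`. -/
def sigmaTop {X : Type*} [NormedAddCommGroup X] [NormedSpace ℝ X]
    (Y : Set (X →L[ℝ] ℝ)) : TopologicalSpace X :=
  TopologicalSpace.induced (fun x => fun y : Y => (y : X →L[ℝ] ℝ) x) Pi.topologicalSpace

/-- The weak* topology on `X*`: pointwise convergence on `X`. -/
def weakStarTop (X : Type*) [NormedAddCommGroup X] [NormedSpace ℝ X] :
    TopologicalSpace (X →L[ℝ] ℝ) :=
  TopologicalSpace.induced (fun f : X →L[ℝ] ℝ => fun x : X => f x) Pi.topologicalSpace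

/-- Property (E) of Efremov: every point of the weak*-closure of a convex bounded set
`C ⊆ X*` is the weak* limit of a sequence from `C`. -/
def PropertyE (X : Type*) [NormedAddCommGroup X] [NormedSpace ℝ X] : Prop :=
  ∀ C : Set (X →L[ℝ] ℝ), Convex ℝ C → Bornology.IsBounded C →
    ∀ f : X →L[ℝ] ℝ, f ∈ @closure (X →L[ℝ] ℝ) (weakStarTop X) C →
      ∃ g : ℕ → X →L[ℝ] ℝ, (∀ n, g n ∈ C) ∧
        ∀ x : X, Filter.Tendsto (fun n => g n x) Filter.atTop (nhds (f x))

/-- A linear subspace `Y ⊆ X*` is norming: `x ↦ sup {|x*(x)| : x* ∈ Y, ‖x*‖ ≤ 1}` is an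
equivalent norm on `X`. -/
def IsNorming {X : Type*} [NormedAddCommGroup X] [NormedSpace ℝ X]
    (Y : Submodule ℝ (X →L[ℝ] ℝ)) : Prop :=
  ∃ c : ℝ, 0 < c ∧ ∀ x : X,
    c * ‖x‖ ≤ sSup ((fun f : X →L[ℝ] ℝ => |f x|) ''
      ((Y : Set (X →L[ℝ] ℝ)) ∩ Metric.closedBall 0 1))

/-- The support functional `s(x*, C) = sup x*(C)`. -/
noncomputable def supportFn {X : Type*} [NormedAddCommGroup X] [NormedSpace ℝ X]
    (f : X →L[ℝ] ℝ) (C : Set X) : ℝ := sSup (f '' C)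

/-- A set function on a σ-algebra, with values in a topological abelian monoid, is
countably additive. -/
def CountablyAdditive {Ω E : Type*} [MeasurableSpace Ω] [AddCommMonoid E]
    [TopologicalSpace E] (ν : Set Ω → E) : Prop :=
  ∀ A : ℕ → Set Ω, (∀ n, MeasurableSet (A n)) → Pairwise (Function.onFun Disjoint A) →
    HasSum (fun n => ν (A n)) (ν (⋃ n, A n))

/-- A real set function on a σ-algebra is finitely additive. -/
def FinitelyAdditive {Ω : Type*} [MeasurableSpace Ω] (μ : Set Ω → ℝ) : Prop :=
  ∀ A B : Set Ω, MeasurableSet A → MeasurableSet B → Disjoint A B →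
    μ (A ∪ B) = μ A + μ B

open Filter Topology MeasureTheory

/-! ### Convex combinations of pointwise null sequences -/

open scoped CompactlySupported in
/-- A uniformly bounded, pointwise null sequence in `C(K)` has convex combinations with arbitrarily
small maximum. Otherwise the convex hull is separated from the open convex set `{v | v < δ}` by a
functional which is necessarily positive, hence a measure, contradicting dominated convergence. -/
theorem exists_convexHull_lt_continuousMap {K : Type*} [TopologicalSpace K] [CompactSpace K]
    [T2Space K] (u : ℕ → C(K, ℝ)) (B : ℝ) (hB : ∀ n x, |u n x| ≤ B)
    (hu : ∀ x, Tendsto (fun n => u n x) atTop (𝓝 0)) (δ : ℝ) (hδ : 0 < δ) :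
    ∃ v ∈ convexHull ℝ (Set.range u), ∀ x, v x < δ := by
  by_contra hcon
  push Not at hcon
  let S : Set C(K, ℝ) := {v | ∀ x, v x < δ}
  have hSo : IsOpen S := by
    have := ContinuousMap.isOpen_setOfPred_mapsTo (X := K) (Y := ℝ) (isCompact_univ)
      (isOpen_Iio (a := δ))
    simpa [S, Set.MapsTo] using this
  have hSc : Convex ℝ S := by
    intro a ha b hb s t hs ht hst x
    have h1 : a x < δ := ha x
    have h2 : b x < δ := hb x
    exact (convex_Iio δ) h1 h2 hs ht hst
  have hdisj : Disjoint S (convexHull ℝ (Set.range u)) := by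
    rw [Set.disjoint_left]
    intro v hv hv'
    obtain ⟨x, hx⟩ := hcon v hv'
    exact absurd (hv x) (not_lt.2 hx)
  obtain ⟨Λ, c, hΛ1, hΛ2⟩ := geometric_hahn_banach_open hSc hSo (convex_convexHull ℝ _) hdisj
  have hc : 0 < c := by
    have := hΛ1 0 (fun x => by simpa using hδ)
    simpa using this
  -- `S` contains every nonpositive function and all its multiples, so `Λ` is positive.
  have hpos : ∀ v : C(K, ℝ), 0 ≤ v → 0 ≤ Λ v := by
    intro v hv
    by_contra hneg
    push Not at hneg
    obtain ⟨n, hn⟩ := exists_nat_gt (c / (-Λ v))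
    have h1 : Λ (-((n : ℝ) • v)) < c := hΛ1 _ (fun x => by
      have : 0 ≤ v x := hv x
      have h2 : 0 ≤ (n : ℝ) * v x := by positivity
      simp only [ContinuousMap.neg_apply, ContinuousMap.smul_apply, smul_eq_mul]
      linarith)
    rw [div_lt_iff₀ (by linarith)] at hn
    simp only [map_neg, map_smul, smul_eq_mul] at h1
    linarith
  let Λ' : C_c(K, ℝ) →ₚ[ℝ] ℝ := PositiveLinearMap.mk₀
    { toFun := fun f => Λ f.toContinuousMap
      map_add' := fun f g => by
        rw [← map_add]; rfl
      map_smul' := fun r f => by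
        rw [RingHom.id_apply, ← map_smul]; rfl }
    (fun f hf => hpos _ hf)
  borelize K
  let μ := RealRMK.rieszMeasure Λ'
  have hint : ∀ n, ∫ x, u n x ∂μ = Λ (u n) := fun n =>
    RealRMK.integral_rieszMeasure Λ' ⟨u n, HasCompactSupport.of_compactSpace _⟩
  have hfin : IsFiniteMeasure μ := inferInstance
  have hlim : Tendsto (fun n => ∫ x, u n x ∂μ) atTop (𝓝 (∫ _, (0 : ℝ) ∂μ)) := by
    refine tendsto_integral_of_dominated_convergence (fun _ => B) ?_ (integrable_const B) ?_ ?_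
    · intro n
      exact (u n).continuous.measurable.aestronglyMeasurable
    · intro n
      exact Eventually.of_forall (fun x => hB n x)
    · exact Eventually.of_forall hu
  simp only [integral_zero, hint] at hlim
  have := ge_of_tendsto' hlim (fun n => hΛ2 (u n) (subset_convexHull ℝ _ ⟨n, rfl⟩))
  linarith

/-- The previous lemma for a linear space `E` of continuous functions on a space `Z`, restricted to
a compact set. The topology of `Z` is not tied to any algebraic structure, so that `Z` can be a
Banach space with the topology `σ(X, Y)`. -/
theorem exists_convexHull_lt {Z E : Type*} [TopologicalSpace Z] [T2Space Z] [AddCommGroup E]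
    [Module ℝ E] (T : E →ₗ[ℝ] Z → ℝ) (hT : ∀ e, Continuous (T e)) (K : Set Z)
    (hK : IsCompact K) (e : ℕ → E) (B : ℝ) (hB : ∀ n, ∀ x ∈ K, |T (e n) x| ≤ B)
    (he : ∀ x ∈ K, Tendsto (fun n => T (e n) x) atTop (𝓝 0)) (δ : ℝ) (hδ : 0 < δ) :
    ∃ h ∈ convexHull ℝ (Set.range e), ∀ x ∈ K, T h x < δ := by
  have : CompactSpace K := isCompact_iff_compactSpace.1 hK
  let T' : E →ₗ[ℝ] C(K, ℝ) :=
    { toFun := fun a => ⟨fun x => T a x, (hT a).comp continuous_subtype_val⟩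
      map_add' := fun a b => by ext x; simp
      map_smul' := fun r a => by ext x; simp }
  obtain ⟨v, hv, hvx⟩ := exists_convexHull_lt_continuousMap (fun n => T' (e n)) B
    (fun n x => hB n x x.2) (fun x => he x x.2) δ hδ
  have hr : Set.range (fun n => T' (e n)) = T' '' Set.range e := by
    rw [← Set.range_comp]; rfl
  rw [hr, ← T'.image_convexHull] at hv
  obtain ⟨h, hh, rfl⟩ := hv
  exact ⟨h, hh, fun x hx => hvx ⟨x, hx⟩⟩

/-! ### Weak* sequential density of a norming subspace -/

/-- Under property (E), every functional is the weak* limit of a bounded sequence in the norming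
subspace `Y`: by Hahn-Banach in finite dimensions it lies in the weak* closure of a ball of `Y`. -/
theorem exists_seq_of_norming {X : Type*} [NormedAddCommGroup X] [NormedSpace ℝ X]
    (hE : PropertyE X) (Y : Submodule ℝ (X →L[ℝ] ℝ)) (hY : IsNorming Y) (f : X →L[ℝ] ℝ) :
    ∃ (R : ℝ) (g : ℕ → X →L[ℝ] ℝ), (∀ n, g n ∈ Y) ∧ (∀ n, ‖g n‖ ≤ R) ∧
      ∀ x, Tendsto (fun n => g n x) atTop (𝓝 (f x)) := by
  obtain ⟨c, hc, hcn⟩ := hY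
  let R := ‖f‖ / c
  have hR : 0 ≤ R := by positivity
  let C : Set (X →L[ℝ] ℝ) := (Y : Set (X →L[ℝ] ℝ)) ∩ Metric.closedBall 0 R
  have hCc : Convex ℝ C := Y.convex.inter (convex_closedBall 0 R)
  have hCb : Bornology.IsBounded C := Metric.isBounded_closedBall.subset Set.inter_subset_right
  have hne : ((Y : Set (X →L[ℝ] ℝ)) ∩ Metric.closedBall 0 1).Nonempty :=
    ⟨0, Y.zero_mem, by simp⟩
  -- The radius `R = ‖f‖ / c` makes the supremum of `C` at `x` at least `R * c * ‖x‖ ≥ f x`.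
  have hkey : ∀ x r, (∀ g ∈ C, g x ≤ r) → f x ≤ r := by
    intro x r h
    have h1 : R * (c * ‖x‖) ≤ r := by
      refine (mul_le_mul_of_nonneg_left (hcn x) hR).trans ?_
      rcases hR.eq_or_lt with h0 | h0
      · rw [← h0, zero_mul]
        simpa using h 0 ⟨Y.zero_mem, by simpa using hR⟩
      rw [← le_div_iff₀' h0]
      refine csSup_le (hne.image _) ?_
      rintro _ ⟨g, ⟨hgY, hg1⟩, rfl⟩
      rw [mem_closedBall_zero_iff] at hg1
      have hmem : ∀ a : ℝ, |a| = R → a • g ∈ C := fun a ha => ⟨Y.smul_mem _ hgY, by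
        rw [mem_closedBall_zero_iff, norm_smul, Real.norm_eq_abs, ha]
        exact mul_le_of_le_one_right hR hg1⟩
      have h2 := h _ (hmem R (abs_of_nonneg hR))
      have h3 := h _ (hmem (-R) (by rw [abs_neg, abs_of_nonneg hR]))
      simp only [smul_apply, smul_eq_mul] at h2 h3
      rw [le_div_iff₀' h0]
      change R * |g x| ≤ r
      rcases abs_cases (g x) with ⟨h4, -⟩ | ⟨h4, -⟩ <;> rw [h4] <;> linarith
    have h2 : R * (c * ‖x‖) = ‖f‖ * ‖x‖ := by
      simp only [R]; field_simp
    have h3 := (le_abs_self _).trans (f.le_opNorm x)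
    linarith
  have hfC : f ∈ @closure (X →L[ℝ] ℝ) (weakStarTop X) C := by
    refine (@closure_induced _ _ Pi.topologicalSpace (fun f : X →L[ℝ] ℝ => fun x : X => f x)
      f C).2 ?_
    rw [mem_closure_iff]
    intro o ho hfo
    obtain ⟨I, u, hu, hsub⟩ := isOpen_pi_iff.1 ho _ hfo
    classical
    let ρ : (X →L[ℝ] ℝ) →ₗ[ℝ] (I → ℝ) :=
      { toFun := fun g i => g i
        map_add' := fun _ _ => rfl
        map_smul' := fun _ _ => rfl }
    have hρ : ρ f ∈ closure (ρ '' C) := by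
      by_contra hcon
      obtain ⟨φ, r, h1, h2⟩ := geometric_hahn_banach_closed_point
        ((hCc.linear_image ρ).closure) isClosed_closure hcon
      let x : X := ∑ i : I, φ (Pi.single i 1) • (i : X)
      have hx : ∀ g, φ (ρ g) = g x := by
        intro g
        have : ρ g = ∑ i : I, g i • (Pi.single i (1 : ℝ) : I → ℝ) := by
          ext j
          simp [ρ, Finset.sum_apply, Pi.single_apply]
        rw [this]
        simp [x, map_sum, mul_comm]
      have h3 := hkey x r (fun g hg => by
        rw [← hx]
        exact (h1 _ (subset_closure ⟨g, hg, rfl⟩)).le)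
      rw [hx] at h2
      linarith
    obtain ⟨_, h4, g, hg, rfl⟩ := mem_closure_iff.1 hρ (Set.univ.pi fun i : I => u i)
      (isOpen_set_pi Set.finite_univ fun i _ => (hu i i.2).1) (fun i _ => (hu i i.2).2)
    exact ⟨_, hsub fun i hi => h4 ⟨i, hi⟩ trivial, g, hg, rfl⟩
  obtain ⟨g, hg, hlim⟩ := hE C hCc hCb f hfC
  exact ⟨R, g, fun n => (hg n).1, fun n => mem_closedBall_zero_iff.1 (hg n).2, hlim⟩

/-! ### Support functionals of set-valued maps on subsets of `ℕ` -/

section Support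

variable {X : Type*} [NormedAddCommGroup X] [NormedSpace ℝ X]

theorem le_supportFn {C : Set X} (hC : Bornology.IsBounded C) (f : X →L[ℝ] ℝ) {x : X}
    (hx : x ∈ C) : f x ≤ supportFn f C :=
  le_csSup (f.lipschitz.isBounded_image hC).bddAbove ⟨x, hx, rfl⟩

theorem exists_lt_of_lt_supportFn {C : Set X} (hC : C.Nonempty) (f : X →L[ℝ] ℝ) {r : ℝ}
    (hr : r < supportFn f C) : ∃ x ∈ C, r < f x := by
  obtain ⟨_, ⟨x, hx, rfl⟩, h⟩ := exists_lt_of_lt_csSup (hC.image f) hr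
  exact ⟨x, hx, h⟩

theorem supportFn_add_neg_nonneg {C : Set X} (hC : C.Nonempty) (hb : Bornology.IsBounded C)
    (f : X →L[ℝ] ℝ) : 0 ≤ supportFn f C + supportFn (-f) C := by
  obtain ⟨x, hx⟩ := hC
  have h1 := le_supportFn hb f hx
  have h2 := le_supportFn hb (-f) hx
  simp only [neg_apply] at h2
  linarith

theorem abs_supportFn_le {C : Set X} (hC : C.Nonempty) (hb : Bornology.IsBounded C)
    (f : X →L[ℝ] ℝ) {B : ℝ} (hB : ∀ x ∈ C, ‖x‖ ≤ B) : |supportFn f C| ≤ ‖f‖ * B := by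
  have hx : ∀ x ∈ C, |f x| ≤ ‖f‖ * B := fun x hx =>
    (f.le_opNorm x).trans (mul_le_mul_of_nonneg_left (hB x hx) (norm_nonneg f))
  rw [abs_le]
  constructor
  · obtain ⟨x, h⟩ := hC
    exact (abs_le.1 (hx x h)).1.trans (le_supportFn hb f h)
  · refine csSup_le (hC.image f) ?_
    rintro _ ⟨x, h, rfl⟩
    exact (abs_le.1 (hx x h)).2

theorem supportFn_empty {N : Set ℕ → Set X}
    (hfa : ∀ (f : X →L[ℝ] ℝ) (I J : Set ℕ), Disjoint I J →
      supportFn f (N (I ∪ J)) = supportFn f (N I) + supportFn f (N J))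
    (f : X →L[ℝ] ℝ) : supportFn f (N ∅) = 0 := by
  have := hfa f ∅ ∅ (by simp)
  rw [Set.union_empty] at this
  linarith

theorem supportFn_finset {N : Set ℕ → Set X}
    (hfa : ∀ (f : X →L[ℝ] ℝ) (I J : Set ℕ), Disjoint I J →
      supportFn f (N (I ∪ J)) = supportFn f (N I) + supportFn f (N J))
    (f : X →L[ℝ] ℝ) (F : Finset ℕ) : supportFn f (N ↑F) = ∑ n ∈ F, supportFn f (N {n}) := by
  induction F using Finset.induction_on with
  | empty => simpa using supportFn_empty hfa f
  | insert a F ha ih =>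
    rw [Finset.sum_insert ha, ← ih, ← hfa f _ _ (by simpa using ha), Finset.coe_insert,
      Set.insert_eq]

theorem supportFn_Ico {N : Set ℕ → Set X}
    (hfa : ∀ (f : X →L[ℝ] ℝ) (I J : Set ℕ), Disjoint I J →
      supportFn f (N (I ∪ J)) = supportFn f (N I) + supportFn f (N J))
    (f : X →L[ℝ] ℝ) {k l : ℕ} (hkl : k ≤ l) :
    supportFn f (N (Set.Ici k)) = supportFn f (N (Set.Ico k l)) + supportFn f (N (Set.Ici l)) := by
  rw [← hfa f _ _ (by
    rw [Set.disjoint_left]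
    intro x hx hx'
    exact absurd hx.2 (not_lt.2 hx')), Set.Ico_union_Ici_eq_Ici hkl]

theorem supportFn_Ici {N : Set ℕ → Set X}
    (hfa : ∀ (f : X →L[ℝ] ℝ) (I J : Set ℕ), Disjoint I J →
      supportFn f (N (I ∪ J)) = supportFn f (N I) + supportFn f (N J))
    (f : X →L[ℝ] ℝ) (k : ℕ) :
    supportFn f (N (Set.Ici k)) =
      supportFn f (N Set.univ) - ∑ n ∈ Finset.range k, supportFn f (N {n}) := by
  have h := supportFn_Ico hfa f (Nat.zero_le k)
  have h2 := supportFn_finset hfa f (Finset.Ico 0 k)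
  rw [Finset.coe_Ico] at h2
  have h0 : Set.Ici (0 : ℕ) = Set.univ := by ext; simp
  rw [h0, h2] at h
  rw [Finset.range_eq_Ico]
  linarith

/-- If `s(g, N)` is countably additive, then `s(g, N I)` is the sum of its masses at the points
of `I`. -/
theorem hasSum_indicator {N : Set ℕ → Set X}
    (hfa : ∀ (f : X →L[ℝ] ℝ) (I J : Set ℕ), Disjoint I J →
      supportFn f (N (I ∪ J)) = supportFn f (N I) + supportFn f (N J))
    {g : X →L[ℝ] ℝ}
    (hg : ∀ I : ℕ → Set ℕ, Pairwise (Function.onFun Disjoint I) →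
      HasSum (fun n => supportFn g (N (I n))) (supportFn g (N (⋃ n, I n)))) (I : Set ℕ) :
    HasSum (I.indicator fun n => supportFn g (N {n})) (supportFn g (N I)) := by
  have h := hg (fun n => {n} ∩ I) (by
    intro m n hmn
    rw [Function.onFun, Set.disjoint_left]
    rintro x ⟨rfl, -⟩ ⟨h, -⟩
    exact hmn h)
  have hU : (⋃ n, {n} ∩ I) = I := by
    ext x; simp
  rw [hU] at h
  convert h using 1
  ext n
  by_cases hn : n ∈ I
  · rw [Set.indicator_of_mem hn, Set.inter_eq_left.2 (Set.singleton_subset_iff.2 hn)]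
  · rw [Set.indicator_of_notMem hn, Set.singleton_inter_eq_empty.2 hn, supportFn_empty hfa]

/-- The uniform boundedness principle for the evaluations at the points of `P`. -/
theorem exists_bound_of_pointwise {E : Type*} [NormedAddCommGroup E] [NormedSpace ℝ E]
    [CompleteSpace E] (S : E →L[ℝ] X →L[ℝ] ℝ) (P : Set X)
    (hP : ∀ e, ∃ C, ∀ x ∈ P, |S e x| ≤ C) :
    ∃ B, ∀ x ∈ P, ∀ e, ‖e‖ ≤ 1 → |S e x| ≤ B := by
  obtain ⟨B, hB⟩ := banach_steinhaus (g := fun x : P => S.flip (x : X)) (fun e => by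
    obtain ⟨C, hC⟩ := hP e
    exact ⟨C, fun x => hC x x.2⟩)
  refine ⟨B, fun x hx e he => ?_⟩
  have h1 : |S e x| ≤ ‖S.flip x‖ * ‖e‖ := (S.flip x).le_opNorm e
  exact h1.trans ((mul_le_of_le_one_right (norm_nonneg _) he).trans (hB ⟨x, hx⟩))

/-- All values of `N` lie in one ball. Evaluations at their points are pointwise bounded on the
Banach space `Y`, hence uniformly bounded, and `Y` is norming. -/
theorem exists_uniform_bound [CompleteSpace X] (Y : Submodule ℝ (X →L[ℝ] ℝ))
    (hYnorming : IsNorming Y) (hYclosed : IsClosed (Y : Set (X →L[ℝ] ℝ))) {N : Set ℕ → Set X}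
    (hbd : ∀ I, Bornology.IsBounded (N I))
    (hfa : ∀ (f : X →L[ℝ] ℝ) (I J : Set ℕ), Disjoint I J →
      supportFn f (N (I ∪ J)) = supportFn f (N I) + supportFn f (N J))
    (hca : ∀ g ∈ Y, ∀ I : ℕ → Set ℕ, Pairwise (Function.onFun Disjoint I) →
      HasSum (fun n => supportFn g (N (I n))) (supportFn g (N (⋃ n, I n)))) :
    ∃ B : ℝ, ∀ I, ∀ x ∈ N I, ‖x‖ ≤ B := by
  have hs : ∀ g ∈ Y, ∀ I, supportFn g (N I) ≤ ∑' n, |supportFn g (N {n})| := by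
    intro g hg I
    have hsum : Summable fun n => |supportFn g (N {n})| := by
      have := (hasSum_indicator hfa (hca g hg) Set.univ).summable
      rw [Set.indicator_univ] at this
      exact this.abs
    refine hasSum_le (fun n => ?_) (hasSum_indicator hfa (hca g hg) I) hsum.hasSum
    by_cases hn : n ∈ I
    · rw [Set.indicator_of_mem hn]; exact le_abs_self _
    · rw [Set.indicator_of_notMem hn]; exact abs_nonneg _
  have hYc : CompleteSpace Y := hYclosed.completeSpace_coe
  obtain ⟨B, hB⟩ := exists_bound_of_pointwise (E := Y) Y.subtypeL (⋃ I, N I) (by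
    intro g
    refine ⟨∑' n, |supportFn (g : X →L[ℝ] ℝ) (N {n})| +
      ∑' n, |supportFn (-(g : X →L[ℝ] ℝ)) (N {n})|, fun x hx => ?_⟩
    obtain ⟨I, hI⟩ := Set.mem_iUnion.1 hx
    have h1 := (le_supportFn (hbd I) (g : X →L[ℝ] ℝ) hI).trans (hs g g.2 I)
    have h2 := (le_supportFn (hbd I) (-(g : X →L[ℝ] ℝ)) hI).trans (hs (-g) (Y.neg_mem g.2) I)
    have h3 : 0 ≤ ∑' n, |supportFn (g : X →L[ℝ] ℝ) (N {n})| := tsum_nonneg fun _ => abs_nonneg _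
    have h4 : 0 ≤ ∑' n, |supportFn (-(g : X →L[ℝ] ℝ)) (N {n})| :=
      tsum_nonneg fun _ => abs_nonneg _
    simp only [neg_apply] at h2
    change |(g : X →L[ℝ] ℝ) x| ≤ _
    rw [abs_le]
    constructor <;> linarith)
  obtain ⟨c, hc, hcn⟩ := hYnorming
  refine ⟨B / c, fun I x hx => ?_⟩
  rw [le_div_iff₀' hc]
  refine (hcn x).trans (csSup_le (Set.Nonempty.image _ ⟨0, Y.zero_mem, by simp⟩) ?_)
  rintro _ ⟨g, ⟨hgY, hg1⟩, rfl⟩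
  rw [mem_closedBall_zero_iff] at hg1
  exact hB x (Set.mem_iUnion.2 ⟨I, hx⟩) ⟨g, hgY⟩ hg1

/-- A bounded finitely additive function on the subsets of `ℕ` has summable point masses. -/
theorem summable_supportFn {N : Set ℕ → Set X} (hne : ∀ I, (N I).Nonempty)
    (hbd : ∀ I, Bornology.IsBounded (N I))
    (hfa : ∀ (f : X →L[ℝ] ℝ) (I J : Set ℕ), Disjoint I J →
      supportFn f (N (I ∪ J)) = supportFn f (N I) + supportFn f (N J))
    {B : ℝ} (hB : ∀ I, ∀ x ∈ N I, ‖x‖ ≤ B) (f : X →L[ℝ] ℝ) :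
    Summable fun n => supportFn f (N {n}) := by
  have hF : ∀ F : Finset ℕ, |∑ n ∈ F, supportFn f (N {n})| ≤ ‖f‖ * B := fun F => by
    rw [← supportFn_finset hfa]
    exact abs_supportFn_le (hne _) (hbd _) f (hB _)
  refine Summable.of_abs (summable_of_sum_le (c := ‖f‖ * B + ‖f‖ * B) (fun _ => abs_nonneg _) ?_)
  intro F
  rw [← Finset.sum_filter_add_sum_filter_not F (fun n => 0 ≤ supportFn f (N {n}))]
  refine add_le_add ?_ ?_
  · rw [Finset.sum_congr rfl (fun n hn => abs_of_nonneg (Finset.mem_filter.1 hn).2)]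
    exact (le_abs_self _).trans (hF _)
  · rw [Finset.sum_congr rfl (fun n hn => abs_of_neg (not_le.1 (Finset.mem_filter.1 hn).2)),
      Finset.sum_neg_distrib]
    exact (neg_le_abs _).trans (hF _)

/-! ### The topology `σ(X, Y)` -/

theorem continuous_sigmaTop (S : Set (X →L[ℝ] ℝ)) (g : X →L[ℝ] ℝ) (hg : g ∈ S) :
    Continuous[sigmaTop S, _] (fun x : X => g x) := by
  have h1 : Continuous fun p : S → ℝ => p ⟨g, hg⟩ := continuous_apply _
  exact @Continuous.comp _ _ _ (sigmaTop S) _ _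
    (fun x : X => fun y : S => (y : X →L[ℝ] ℝ) x) _ h1 continuous_induced_dom

theorem isClosed_sigmaTop_abs_le (Y : Submodule ℝ (X →L[ℝ] ℝ)) (g : X →L[ℝ] ℝ) (hg : g ∈ Y)
    (c : ℝ) : @IsClosed X (sigmaTop (Y : Set (X →L[ℝ] ℝ))) {x | |g x| ≤ c} := by
  have h1 : IsClosed {r : ℝ | |r| ≤ c} := isClosed_le continuous_abs continuous_const
  exact @IsClosed.preimage _ _ (sigmaTop (Y : Set (X →L[ℝ] ℝ))) _ _
    (continuous_sigmaTop Y g hg) _ h1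

theorem t2Space_sigmaTop (Y : Submodule ℝ (X →L[ℝ] ℝ)) (hY : IsNorming Y) :
    @T2Space X (sigmaTop (Y : Set (X →L[ℝ] ℝ))) := by
  refine @T2Space.of_injective_continuous _ _ (sigmaTop (Y : Set (X →L[ℝ] ℝ))) _ _
    (fun x => fun y : (Y : Set (X →L[ℝ] ℝ)) => (y : X →L[ℝ] ℝ) x) ?_ continuous_induced_dom
  intro x x' hxx
  obtain ⟨c, hc, hcn⟩ := hY
  have h0 : c * ‖x - x'‖ ≤ 0 := by
    refine (hcn _).trans (csSup_le (Set.Nonempty.image _ ⟨0, Y.zero_mem, by simp⟩) ?_)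
    rintro _ ⟨g, ⟨hgY, -⟩, rfl⟩
    have : g x = g x' := congrFun hxx ⟨g, hgY⟩
    simp [this]
  have h1 : ‖x - x'‖ ≤ 0 := by
    by_contra hcon
    push Not at hcon
    have := mul_pos hc hcon
    linarith
  exact sub_eq_zero.1 (norm_le_zero_iff.1 h1)

/-! ### The gliding hump -/

/-- The defect of countable additivity of `s(f, N)` is nonpositive. If it were positive, a gliding
hump would give a weak*-null sequence `H t` in `Y` and points `D t ∈ N (J t)`, with the `J t`
pairwise disjoint blocks, such that `H t (D 0 + ⋯ + D (s - 1)) ≥ ε` for all `s > t`. Every convex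
combination `h` of the `H t` then satisfies `s(h, N (⋃ t, J t)) ≥ ε`, which contradicts
`exists_convexHull_lt` on the compact closure of `N (⋃ t, J t)`. -/
theorem limit_nonpos [CompleteSpace X] (hE : PropertyE X) (Y : Submodule ℝ (X →L[ℝ] ℝ))
    (hYnorming : IsNorming Y) {N : Set ℕ → Set X} (hne : ∀ I, (N I).Nonempty)
    (hbd : ∀ I, Bornology.IsBounded (N I))
    (hcpt : ∀ I, @IsCompact X (sigmaTop (Y : Set (X →L[ℝ] ℝ)))
        (@closure X (sigmaTop (Y : Set (X →L[ℝ] ℝ))) (N I)))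
    (hfa : ∀ (f : X →L[ℝ] ℝ) (I J : Set ℕ), Disjoint I J →
      supportFn f (N (I ∪ J)) = supportFn f (N I) + supportFn f (N J))
    (hca : ∀ g ∈ Y, ∀ I : ℕ → Set ℕ, Pairwise (Function.onFun Disjoint I) →
      HasSum (fun n => supportFn g (N (I n))) (supportFn g (N (⋃ n, I n))))
    {B : ℝ} (hB : ∀ I, ∀ x ∈ N I, ‖x‖ ≤ B) (f : X →L[ℝ] ℝ) {L : ℝ}
    (hL : Tendsto (fun k => supportFn f (N (Set.Ici k))) atTop (𝓝 L)) : L ≤ 0 := by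
  by_contra hLpos
  push Not at hLpos
  obtain ⟨R, g, hgY, hgR, hgf⟩ := exists_seq_of_norming hE Y hYnorming f
  obtain ⟨ε, hε, rfl⟩ : ∃ ε > 0, 8 * ε = L := ⟨L / 8, by positivity, by ring⟩
  obtain ⟨k₀, hk₀⟩ := Metric.tendsto_atTop.1 hL (ε / 2) (by positivity)
  have hlow : ∀ k ≥ k₀, 7 * ε < supportFn f (N (Set.Ici k)) := fun k hk => by
    have := (abs_lt.1 (hk₀ k hk)).1
    linarith
  have hblock : ∀ k ≥ k₀, ∀ l ≥ k, supportFn f (N (Set.Ico k l)) ≤ ε := fun k hk l hl => by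
    have h1 := (abs_lt.1 (hk₀ k hk)).2
    have h2 := (abs_lt.1 (hk₀ l (hk.trans hl))).1
    have h3 := supportFn_Ico hfa f hl
    linarith
  have hsumY : ∀ h ∈ Y, Summable fun n => supportFn h (N {n}) := fun h hh => by
    have := (hasSum_indicator hfa (hca h hh) Set.univ).summable
    rwa [Set.indicator_univ] at this
  have htailY : ∀ h ∈ Y, Tendsto (fun k => supportFn h (N (Set.Ici k))) atTop (𝓝 0) := by
    intro h hh
    have h1 := hasSum_indicator hfa (hca h hh) Set.univ
    rw [Set.indicator_univ] at h1
    have h2 := (tendsto_const_nhds (x := supportFn h (N Set.univ))).sub h1.tendsto_sum_nat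
    rw [sub_self] at h2
    exact h2.congr fun k => (supportFn_Ici hfa h k).symm
  -- One step of the gliding hump: `d` is chosen where `g n` is large although `f` is small,
  -- and `n'` is chosen afterwards so that `g n'` is as small as `f` at `d`.
  have step : ∀ (t : ℕ) (p : {k // k₀ ≤ k} × X), ∃ (n n' l : ℕ) (k' : {k // k₀ ≤ k}) (d : X),
      t ≤ n ∧ t ≤ n' ∧ p.1.1 ≤ l ∧ l ≤ k'.1 ∧ d ∈ N (Set.Ico p.1.1 l) ∧
      -(ε / 2) ≤ (g n - g n') p.2 ∧ 2 * ε ≤ (g n - g n') d ∧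
      ∀ m, ∑ i ∈ Finset.Ico k'.1 m, |supportFn (-(g n - g n')) (N {i})| ≤ ε / 2 := by
    rintro t ⟨⟨k, hk⟩, w⟩
    obtain ⟨y, hy, hfy⟩ := exists_lt_of_lt_supportFn (hne _) f (hlow k hk)
    have hnear : ∀ x : X, ∀ᶠ n in atTop, |g n x - f x| < ε / 4 := fun x =>
      (Metric.tendsto_nhds.1 (hgf x) (ε / 4) (by positivity))
    obtain ⟨n, hnt, hny, hnw⟩ := ((eventually_ge_atTop t).and ((hnear y).and (hnear w))).exists
    obtain ⟨l, hlk, hl⟩ := ((eventually_ge_atTop k).and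
      ((htailY _ (hgY n)).eventually_lt_const hε)).exists
    have hbig : 4 * ε < supportFn (g n) (N (Set.Ico k l)) := by
      have h1 := le_supportFn (hbd _) (g n) hy
      have h2 := supportFn_Ico hfa (g n) hlk
      have h3 := (abs_lt.1 hny).1
      linarith
    obtain ⟨d, hd, hgd⟩ := exists_lt_of_lt_supportFn (hne _) (g n) hbig
    have hfd : f d ≤ ε := (le_supportFn (hbd _) f hd).trans (hblock k hk l hlk)
    obtain ⟨n', hnt', hnd', hnw'⟩ :=
      ((eventually_ge_atTop t).and ((hnear d).and (hnear w))).exists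
    have hHY : -(g n - g n') ∈ Y := Y.neg_mem (Y.sub_mem (hgY n) (hgY n'))
    have hsum := (hsumY _ hHY).abs
    obtain ⟨k', hk'l, hk'⟩ : ∃ k' ≥ max l k₀, ∀ m,
        ∑ i ∈ Finset.Ico k' m, |supportFn (-(g n - g n')) (N {i})| ≤ ε / 2 := by
      obtain ⟨S, hS⟩ := summable_iff_vanishing_norm.1 hsum (ε / 2) (by positivity)
      obtain ⟨b, hb⟩ := S.bddAbove
      refine ⟨max (max l k₀) (b + 1), le_max_left _ _, fun m => ?_⟩
      refine (le_abs_self _).trans (hS _ ?_).le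
      rw [Finset.disjoint_left]
      intro i hi hiS
      have h1 := (Finset.mem_Ico.1 hi).1
      have h2 : i ≤ b := hb hiS
      have h3 := (le_max_right (max l k₀) (b + 1)).trans h1
      omega
    refine ⟨n, n', l, ⟨k', (le_max_right _ _).trans hk'l⟩, d, hnt, hnt', hlk,
      (le_max_left _ _).trans hk'l, hd, ?_, ?_, hk'⟩
    · have h1 := (abs_lt.1 hnw).1
      have h2 := (abs_lt.1 hnw').2
      simp only [sub_apply]
      linarith
    · have h2 := (abs_lt.1 hnd').2
      simp only [sub_apply]
      linarith
  choose n n' l k' d hn hn' hkl hlk' hd hw hdd htail using step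
  let st : ℕ → {k // k₀ ≤ k} × X := fun t =>
    Nat.rec (⟨k₀, le_rfl⟩, 0) (fun t p => (k' t p, p.2 + d t p)) t
  let κ : ℕ → ℕ := fun t => (st t).1.1
  let w : ℕ → X := fun t => (st t).2
  let D : ℕ → X := fun t => d t (st t)
  let J : ℕ → Set ℕ := fun t => Set.Ico (κ t) (l t (st t))
  let H : ℕ → X →L[ℝ] ℝ := fun t => g (n t (st t)) - g (n' t (st t))
  have hHY : ∀ t, H t ∈ Y := fun t => Y.sub_mem (hgY _) (hgY _)
  have hwsucc : ∀ t, w (t + 1) = w t + D t := fun t => rfl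
  have hκl : ∀ t, κ t ≤ l t (st t) := fun t => hkl t (st t)
  have hlκ : ∀ t, l t (st t) ≤ κ (t + 1) := fun t => hlk' t (st t)
  have hκ : Monotone κ := monotone_nat_of_le_succ fun t => (hκl t).trans (hlκ t)
  have hDJ : ∀ t, D t ∈ N (J t) := fun t => hd t (st t)
  have hJ : Pairwise (Function.onFun Disjoint J) := by
    intro s t hst
    exact (hκ.pairwise_disjoint_on_Ico_succ hst).mono
      (Set.Ico_subset_Ico_right (hlκ s)) (Set.Ico_subset_Ico_right (hlκ t))
  -- The terms after the `t`-th change `H t (w s)` by at most a tail sum of point masses.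
  have htl : ∀ t s, t + 1 ≤ s → -(H t) (w s - w (t + 1)) ≤
      ∑ i ∈ Finset.Ico (κ (t + 1)) (κ s), |supportFn (-(H t)) (N {i})| := by
    intro t s hts
    induction s, hts using Nat.le_induction with
    | base => simp
    | succ s hts ih =>
      have h1 := le_supportFn (hbd _) (-(H t)) (hDJ s)
      have h2 := supportFn_finset hfa (-(H t)) (Finset.Ico (κ s) (l s (st s)))
      rw [Finset.coe_Ico] at h2
      have h3 : ∑ i ∈ Finset.Ico (κ s) (l s (st s)), supportFn (-(H t)) (N {i}) ≤
          ∑ i ∈ Finset.Ico (κ s) (κ (s + 1)), |supportFn (-(H t)) (N {i})| :=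
        (Finset.sum_le_sum fun i _ => le_abs_self _).trans
          (Finset.sum_le_sum_of_subset_of_nonneg (Finset.Ico_subset_Ico_right (hlκ s))
            fun _ _ _ => abs_nonneg _)
      rw [← Finset.sum_Ico_consecutive _ (hκ hts) (hκ (Nat.le_succ s)), hwsucc s]
      simp only [neg_apply, map_sub, map_add] at ih h1 ⊢
      have h4 : supportFn (-(H t)) (N (J s)) =
        ∑ i ∈ Finset.Ico (κ s) (l s (st s)), supportFn (-(H t)) (N {i}) := h2
      simp only [Nat.succ_eq_add_one] at *
      linarith
  have hHw : ∀ t s, t + 1 ≤ s → ε ≤ H t (w s) := by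
    intro t s hts
    have h1 := htl t s hts
    have h2 : ∑ i ∈ Finset.Ico (κ (t + 1)) (κ s), |supportFn (-(H t)) (N {i})| ≤ ε / 2 :=
      htail t (st t) (κ s)
    have h3 : -(ε / 2) ≤ H t (w t) := hw t (st t)
    have h4 : 2 * ε ≤ H t (D t) := hdd t (st t)
    rw [hwsucc t] at h1
    simp only [map_sub, map_add] at h1
    linarith
  let U : Set ℕ := ⋃ t, J t
  let e : ℕ → Y := fun t => ⟨H t, hHY t⟩
  have hHlim : ∀ x, Tendsto (fun t => H t x) atTop (𝓝 0) := by
    intro x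
    have h1 : Tendsto (fun t => n t (st t)) atTop atTop :=
      tendsto_atTop_mono (fun t => hn t (st t)) tendsto_id
    have h2 : Tendsto (fun t => n' t (st t)) atTop atTop :=
      tendsto_atTop_mono (fun t => hn' t (st t)) tendsto_id
    have := ((hgf x).comp h1).sub ((hgf x).comp h2)
    rw [sub_self] at this
    exact this
  let T : Y →ₗ[ℝ] X → ℝ :=
    { toFun := fun a x => (a : X →L[ℝ] ℝ) x
      map_add' := fun _ _ => rfl
      map_smul' := fun _ _ => rfl }
  have hHb : ∀ t, ∀ x ∈ @closure X (sigmaTop (Y : Set (X →L[ℝ] ℝ))) (N U),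
      |H t x| ≤ (R + R) * B := by
    intro t
    refine @closure_minimal X (sigmaTop (Y : Set (X →L[ℝ] ℝ))) _ _ ?_
      (isClosed_sigmaTop_abs_le Y (H t) (hHY t) _)
    intro x hx
    have h1 : ‖H t‖ ≤ R + R := (norm_sub_le _ _).trans (add_le_add (hgR _) (hgR _))
    exact (H t).le_of_opNorm_le_of_le h1 (hB U x hx)
  obtain ⟨h, hhull, hlt⟩ := @exists_convexHull_lt X Y (sigmaTop (Y : Set (X →L[ℝ] ℝ)))
    (t2Space_sigmaTop Y hYnorming) _ _ T (fun a => continuous_sigmaTop _ (a : X →L[ℝ] ℝ) a.2) _ (hcpt U) e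
    ((R + R) * B) hHb (fun x _ => hHlim x) (ε / 2) (by positivity)
  have hev : ∀ a ∈ convexHull ℝ (Set.range e), ∀ᶠ s in atTop, ε ≤ (a : X →L[ℝ] ℝ) (w s) := by
    intro a ha
    refine convexHull_min (t := {a : Y | ∀ᶠ s in atTop, ε ≤ (a : X →L[ℝ] ℝ) (w s)}) ?_ ?_ ha
    · rintro _ ⟨t, rfl⟩
      filter_upwards [eventually_ge_atTop (t + 1)] with s hs using hHw t s hs
    · intro a ha b hb r r' hr hr' hrr
      filter_upwards [ha, hb] with s hs hs'
      exact (convex_Ici ε) hs hs' hr hr' hrr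
  have hsum : ∀ s, (h : X →L[ℝ] ℝ) (w s) ≤ ∑ t ∈ Finset.range s, supportFn h (N (J t)) := by
    intro s
    induction s with
    | zero => simp [w, st]
    | succ s ih =>
      rw [hwsucc, map_add, Finset.sum_range_succ]
      exact add_le_add ih (le_supportFn (hbd _) _ (hDJ s))
  have hge : ε ≤ supportFn (h : X →L[ℝ] ℝ) (N U) :=
    ge_of_tendsto (hca h h.2 J hJ).tendsto_sum_nat
      ((hev h hhull).mono fun s hs => hs.trans (hsum s))
  have hle : supportFn (h : X →L[ℝ] ℝ) (N U) ≤ ε / 2 := by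
    refine csSup_le ((hne U).image _) ?_
    rintro _ ⟨x, hx, rfl⟩
    exact (hlt x (@subset_closure X (sigmaTop (Y : Set (X →L[ℝ] ℝ))) _ _ hx)).le
  linarith

/-- The theorem for set-valued maps on the subsets of `ℕ`. The defects of countable additivity of
`f` and `-f` are both nonpositive, while their sum is nonnegative. -/
theorem hasSum_supportFn [CompleteSpace X] (hE : PropertyE X) (Y : Submodule ℝ (X →L[ℝ] ℝ))
    (hYnorming : IsNorming Y) (hYclosed : IsClosed (Y : Set (X →L[ℝ] ℝ)))
    {N : Set ℕ → Set X} (hne : ∀ I, (N I).Nonempty)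
    (hbd : ∀ I, Bornology.IsBounded (N I))
    (hcpt : ∀ I, @IsCompact X (sigmaTop (Y : Set (X →L[ℝ] ℝ)))
        (@closure X (sigmaTop (Y : Set (X →L[ℝ] ℝ))) (N I)))
    (hfa : ∀ (f : X →L[ℝ] ℝ) (I J : Set ℕ), Disjoint I J →
      supportFn f (N (I ∪ J)) = supportFn f (N I) + supportFn f (N J))
    (hca : ∀ g ∈ Y, ∀ I : ℕ → Set ℕ, Pairwise (Function.onFun Disjoint I) →
      HasSum (fun n => supportFn g (N (I n))) (supportFn g (N (⋃ n, I n))))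
    (f : X →L[ℝ] ℝ) :
    HasSum (fun n => supportFn f (N {n})) (supportFn f (N Set.univ)) := by
  obtain ⟨B, hB⟩ := exists_uniform_bound Y hYnorming hYclosed hbd hfa hca
  have hlim : ∀ f : X →L[ℝ] ℝ, Tendsto (fun k => supportFn f (N (Set.Ici k))) atTop
      (𝓝 (supportFn f (N Set.univ) - ∑' n, supportFn f (N {n}))) := by
    intro f
    have h := (tendsto_const_nhds (x := supportFn f (N Set.univ))).sub
      (summable_supportFn hne hbd hfa hB f).hasSum.tendsto_sum_nat
    exact h.congr fun k => (supportFn_Ici hfa f k).symm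
  have h1 := limit_nonpos hE Y hYnorming hne hbd hcpt hfa hca hB f (hlim f)
  have h2 := limit_nonpos hE Y hYnorming hne hbd hcpt hfa hca hB (-f) (hlim (-f))
  have h3 := ge_of_tendsto' ((hlim f).add (hlim (-f)))
    (fun k => supportFn_add_neg_nonneg (hne (Set.Ici k)) (hbd _) f)
  have h4 : supportFn f (N Set.univ) = ∑' n, supportFn f (N {n}) := by linarith
  rw [h4]
  exact (summable_supportFn hne hbd hfa hB f).hasSum

end Support

/-- Let `X` be a Banach space with property (E) and `Y ⊆ X*` a
norming norm-closed linear subspace. If `M : Σ → b(X)` has relatively `σ(X,Y)`-compact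
values, `s(x*, M)` is countably additive for every `x* ∈ Y`, and `s(x*, M)` is finitely
additive for every `x* ∈ X*`, then `M` is a multimeasure: `s(x*, M)` is countably
additive for every `x* ∈ X*`. -/
theorem statement15 {Ω X : Type*} [MeasurableSpace Ω]
    [NormedAddCommGroup X] [NormedSpace ℝ X] [CompleteSpace X]
    (hE : PropertyE X)
    (Y : Submodule ℝ (X →L[ℝ] ℝ))
    (hYnorming : IsNorming Y)
    (hYclosed : IsClosed (Y : Set (X →L[ℝ] ℝ)))
    (M : Set Ω → Set X)
    (hne : ∀ A : Set Ω, MeasurableSet A → (M A).Nonempty)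
    (hbd : ∀ A : Set Ω, MeasurableSet A → Bornology.IsBounded (M A))
    (hcpt : ∀ A : Set Ω, MeasurableSet A →
      @IsCompact X (sigmaTop (Y : Set (X →L[ℝ] ℝ)))
        (@closure X (sigmaTop (Y : Set (X →L[ℝ] ℝ))) (M A)))
    (hca : ∀ f ∈ Y, CountablyAdditive (fun A => supportFn f (M A)))
    (hfa : ∀ f : X →L[ℝ] ℝ, FinitelyAdditive (fun A => supportFn f (M A))) :
    ∀ f : X →L[ℝ] ℝ, CountablyAdditive (fun A => supportFn f (M A)) := by
  intro f A hA hdisj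
  -- Subsets of `ℕ` index the unions of subfamilies of `A`.
  let V : Set ℕ → Set Ω := fun I => ⋃ n ∈ I, A n
  have hV : ∀ I, MeasurableSet (V I) := fun I =>
    MeasurableSet.biUnion I.to_countable fun n _ => hA n
  have hVd : ∀ I J : Set ℕ, Disjoint I J → Disjoint (V I) (V J) := by
    intro I J hIJ
    simp only [V, Set.disjoint_iUnion_left, Set.disjoint_iUnion_right]
    intro j hj i hi
    have hij : i ≠ j := by
      rintro rfl
      exact Set.disjoint_left.1 hIJ hi hj
    exact hdisj hij
  have h := hasSum_supportFn (N := fun I => M (V I)) hE Y hYnorming hYclosed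
    (fun I => hne _ (hV I)) (fun I => hbd _ (hV I)) (fun I => hcpt _ (hV I))
    (fun f I J hIJ => by
      have := hfa f (V I) (V J) (hV I) (hV J) (hVd I J hIJ)
      have hU : V (I ∪ J) = V I ∪ V J := Set.biUnion_union I J A
      simpa only [hU] using this)
    (fun g hg I hI => by
      have := hca g hg (fun n => V (I n)) (fun n => hV _) (fun m n hmn => hVd _ _ (hI hmn))
      have hU : V (⋃ n, I n) = ⋃ n, V (I n) := Set.biUnion_iUnion I A
      simpa only [hU] using this) f
  simpa [V] using h
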